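/- arXiv:2302.13844 — 2 statements merged into one kernel-verified Lean document; each statement's English description precedes it below -/
import Mathlib

section
/- For every γ > 0 and every ε > 0 there exists R₀ > 0 such that for every (ψ₀, θ₀) ∈ ℝ² with 0 < ‖(ψ₀, θ₀)‖ < R₀ one has ‖G(ψ₀, θ₀)‖ > ‖(ψ₀, θ₀)‖, where ‖·‖ is the Euclidean norm. In particular, (0,0) is a repelling equilibrium of the regularized Dirac-GAN dynamics. -/
/-- The origin is a repelling equilibrium of the regularized Dirac-GAN update map
`G(ψ, θ) = (ψ − γ(4ψ³ + εθ), θ − γ(4θ³ − εψ))`: near the origin the Euclidean norm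
strictly increases under one update step. -/
theorem diracGAN_origin_repelling :
    ∀ γ : ℝ, 0 < γ → ∀ ε : ℝ, 0 < ε → ∃ R₀ > (0 : ℝ),
      ∀ ψ₀ θ₀ : ℝ,
        0 < Real.sqrt (ψ₀ ^ 2 + θ₀ ^ 2) →
        Real.sqrt (ψ₀ ^ 2 + θ₀ ^ 2) < R₀ →
        Real.sqrt ((ψ₀ - γ * (4 * ψ₀ ^ 3 + ε * θ₀)) ^ 2
            + (θ₀ - γ * (4 * θ₀ ^ 3 - ε * ψ₀)) ^ 2)
          > Real.sqrt (ψ₀ ^ 2 + θ₀ ^ 2) := by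
  intro γ hγ ε hε
  refine ⟨Real.sqrt (γ * ε ^ 2 / (8 + 4 * γ * ε)), Real.sqrt_pos.mpr (by positivity), ?_⟩
  intro x y h0 h1
  have hs : 0 < x ^ 2 + y ^ 2 := Real.sqrt_pos.mp h0
  have h2 : x ^ 2 + y ^ 2 < γ * ε ^ 2 / (8 + 4 * γ * ε) :=
    (Real.sqrt_lt_sqrt_iff hs.le).mp h1
  have hd : 0 < 8 + 4 * γ * ε := by positivity
  rw [lt_div_iff₀ hd] at h2
  apply Real.sqrt_lt_sqrt hs.le
  have e1 : 0 < γ * (x ^ 2 + y ^ 2) * (γ * ε ^ 2 - (x ^ 2 + y ^ 2) * (8 + 4 * γ * ε)) :=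
    mul_pos (mul_pos hγ hs) (by linarith)
  have e2 : 0 ≤ 16 * γ ^ 2 * (x ^ 6 + y ^ 6) := by positivity
  have e3 : 0 ≤ 16 * γ * (x ^ 2 * y ^ 2) := by positivity
  have e4 : 0 ≤ 2 * γ ^ 2 * ε * (2 * x * y + (x ^ 2 - y ^ 2)) ^ 2 := by positivity
  have e5 : 0 ≤ 2 * γ ^ 2 * ε * (x ^ 2 + y ^ 2) ^ 2 := by positivity
  linarith
end

section
/- For every ε > 0 there exists γ₀ > 0 such that for every γ with 0 < γ < γ₀, any sequence (ψ_t, θ_t) in ℝ² satisfying ψ_{t+1} = ψ_t − γ(4ψ_t³ + εθ_t) and θ_{t+1} = θ_t − γ(4θ_t³ − εψ_t) with (ψ₀, θ₀) ∈ [−√ε, √ε]² remains in [−√ε, √ε]² for all t ≥ 0. -/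
theorem dg_upper (s g x y : ℝ) (hs : 0 < s) (hg : 0 < g) (h : 12 * g * s ^ 2 ≤ 1)
    (x1 : -s ≤ x) (x2 : x ≤ s) (y1 : -s ≤ y) :
    x - g * (4 * x ^ 3 + s ^ 2 * y) ≤ s := by
  have hq : s ^ 2 + s * x + x ^ 2 ≤ 3 * s ^ 2 := by nlinarith
  have hq2 : g * (s ^ 2 + s * x + x ^ 2) ≤ g * (3 * s ^ 2) :=
    mul_le_mul_of_nonneg_left hq hg.le
  have h1 : 0 ≤ (s - x) * (1 - 4 * (g * (s ^ 2 + s * x + x ^ 2))) :=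
    mul_nonneg (by linarith) (by linarith)
  have h2 : 0 ≤ g * s ^ 2 * (y + s) := mul_nonneg (by positivity) (by linarith)
  have h3 : 0 ≤ g * s ^ 3 := by positivity
  linarith

theorem dg_step (s g x y : ℝ) (hs : 0 < s) (hg : 0 < g) (h : 12 * g * s ^ 2 ≤ 1)
    (hx : x ∈ Set.Icc (-s) s) (hy : y ∈ Set.Icc (-s) s) :
    x - g * (4 * x ^ 3 + s ^ 2 * y) ∈ Set.Icc (-s) s := by
  obtain ⟨x1, x2⟩ := hx
  obtain ⟨y1, y2⟩ := hy
  have a := dg_upper s g x y hs hg h x1 x2 y1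
  have b := dg_upper s g (-x) (-y) hs hg h (by linarith) (by linarith) (by linarith)
  exact ⟨by linarith, a⟩

/-- For sufficiently small learning rates, learning trajectories of the regularized Dirac-GAN
dynamics started in the square `[−√ε, √ε]²` never leave it. -/
theorem diracGAN_square_traps :
    ∀ ε : ℝ, 0 < ε → ∃ γ₀ > (0 : ℝ), ∀ γ : ℝ, 0 < γ → γ < γ₀ →
      ∀ ψ θ : ℕ → ℝ,
        (∀ t, ψ (t + 1) = ψ t - γ * (4 * (ψ t) ^ 3 + ε * θ t)) →
        (∀ t, θ (t + 1) = θ t - γ * (4 * (θ t) ^ 3 - ε * ψ t)) →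
        ψ 0 ∈ Set.Icc (-Real.sqrt ε) (Real.sqrt ε) →
        θ 0 ∈ Set.Icc (-Real.sqrt ε) (Real.sqrt ε) →
        ∀ t, ψ t ∈ Set.Icc (-Real.sqrt ε) (Real.sqrt ε) ∧
          θ t ∈ Set.Icc (-Real.sqrt ε) (Real.sqrt ε) := by
  intro ε hε
  refine ⟨1 / (12 * ε), by positivity, ?_⟩
  intro γ hγ hγ0 ψ θ hψ hθ h0 h0' t
  have hs : 0 < Real.sqrt ε := Real.sqrt_pos.2 hε
  have hsq : Real.sqrt ε ^ 2 = ε := Real.sq_sqrt hε.le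
  have hb : 12 * γ * Real.sqrt ε ^ 2 ≤ 1 := by
    rw [hsq]
    rw [lt_div_iff₀ (by positivity)] at hγ0
    linarith
  induction t with
  | zero => exact ⟨h0, h0'⟩
  | succ t ih =>
    obtain ⟨i1, i2⟩ := ih
    have a := dg_step _ γ _ _ hs hγ hb i1 i2
    have b := dg_step _ γ (θ t) (-ψ t) hs hγ hb i2
      ⟨by linarith [i1.2], by linarith [i1.1]⟩
    rw [hsq] at a b
    rw [hψ, hθ]
    refine ⟨a, ?_⟩
    have e : θ t - γ * (4 * (θ t) ^ 3 - ε * ψ t) = θ t - γ * (4 * (θ t) ^ 3 + ε * -ψ t) := by ring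
    rw [e]
    exact b
end
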